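/- Let α = (λ/Λ)(Q−1)+1 with Q = 2n+2 and 0 < λ ≤ Λ. Then the radial functions Φ₁(ξ) = φ₁(ρ(ξ)), where φ₁(r) = C₁r^{2−α}+C₂ if α < 2, φ₁(r) = C₁log r + C₂ if α = 2, and φ₁(r) = −C₁r^{2−α}+C₂ if α > 2 (C₁ ≥ 0, C₂ ∈ ℝ), satisfy 𝓜⁺_{λ,Λ}(D²Φ₁) = 0 classically in ℝ^{2n+1}∖{0}, and φ₁ is concave and increasing on (0,∞). -/

import Mathlib

open scoped BigOperators

noncomputable section

/-- Direction vector of the Heisenberg vector field `X_i` at the point `ξ ∈ ℝ^{2n+1}`: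
for `i < n`, `X_i = ∂_i + 2 ξ_{i+n} ∂_{2n}`; for `n ≤ i < 2n`, `X_i = ∂_i - 2 ξ_{i-n} ∂_{2n}`
(indices `0,…,2n`, the last coordinate being index `2n`). -/
def Xvec (n : ℕ) (ξ : Fin (2*n+1) → ℝ) (i : Fin (2*n)) : Fin (2*n+1) → ℝ :=
  fun j =>
    (if (j : ℕ) = (i : ℕ) then 1 else 0) +
    (if (j : ℕ) = 2*n then
        (if h : (i : ℕ) < n then 2 * ξ ⟨(i : ℕ) + n, by omega⟩
         else -2 * ξ ⟨(i : ℕ) - n, by have := i.isLt; omega⟩)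
      else 0)

/-- The Heisenberg vector field `X_i` acting on a function. -/
def X (n : ℕ) (i : Fin (2*n)) (f : (Fin (2*n+1) → ℝ) → ℝ)
    (ξ : Fin (2*n+1) → ℝ) : ℝ :=
  fderiv ℝ f ξ (Xvec n ξ i)

/-- `∑_{i=1}^{2n} ξ_i²`, the squared euclidean norm of the horizontal coordinates. -/
def hsq (n : ℕ) (ξ : Fin (2*n+1) → ℝ) : ℝ :=
  ∑ i : Fin (2*n), (ξ ⟨(i : ℕ), by have := i.isLt; omega⟩)^2

/-- The homogeneous norm `ρ(ξ) = ((∑ ξ_i²)² + ξ_{2n+1}²)^{1/4}`. -/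
def rho (n : ℕ) (ξ : Fin (2*n+1) → ℝ) : ℝ :=
  ((hsq n ξ)^2 + (ξ ⟨2*n, by omega⟩)^2) ^ (1/4 : ℝ)

/-- `|∇_{H^n}ρ(ξ)|²`. -/
def gradSq (n : ℕ) (ξ : Fin (2*n+1) → ℝ) : ℝ :=
  ∑ i : Fin (2*n), (X n i (rho n) ξ)^2

/-- The symmetrized Heisenberg Hessian `D²_{H^n} f = (X_i X_j f)_{sym}`. -/
def HessH (n : ℕ) (f : (Fin (2*n+1) → ℝ) → ℝ) (ξ : Fin (2*n+1) → ℝ) :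
    Matrix (Fin (2*n)) (Fin (2*n)) ℝ :=
  Matrix.of fun i j =>
    (X n i (fun η => X n j f η) ξ + X n j (fun η => X n i f η) ξ) / 2

/-- The Pucci maximal operator `𝓟⁺_{λ,Λ}(M) = -Λ ∑_{e_i<0} e_i - λ ∑_{e_i>0} e_i`. -/
def pucciPlus (la La : ℝ) {k : ℕ} {M : Matrix (Fin k) (Fin k) ℝ}
    (hM : M.IsHermitian) : ℝ :=
  ∑ i, (-La * min (hM.eigenvalues i) 0 - la * max (hM.eigenvalues i) 0)

/-- The Pucci minimal operator `𝓟⁻_{λ,Λ}(M) = -Λ ∑_{e_i>0} e_i - λ ∑_{e_i<0} e_i`. -/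
def pucciMinus (la La : ℝ) {k : ℕ} {M : Matrix (Fin k) (Fin k) ℝ}
    (hM : M.IsHermitian) : ℝ :=
  ∑ i, (-La * max (hM.eigenvalues i) 0 - la * min (hM.eigenvalues i) 0)

open scoped Matrix

/-- The sum of the negative parts of the eigenvalues of `a • 1 + b • w wᵀ + c • z zᵀ` with `w ⟂ z`,
when at most the eigenvalue in the direction `w` is negative. -/
theorem sum_min_eigenvalues_eq {k : ℕ} {M : Matrix (Fin k) (Fin k) ℝ} (hM : M.IsHermitian)
    {a b c : ℝ} {w z : Fin k → ℝ}
    (hMe : M = a • 1 + b • Matrix.vecMulVec w w + c • Matrix.vecMulVec z z)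
    (hwz : w ⬝ᵥ z = 0) (ha : 0 ≤ a) (hc : 0 ≤ c) (hμ : a + b * (w ⬝ᵥ w) ≤ 0) :
    ∑ i, min (hM.eigenvalues i) 0 = a + b * (w ⬝ᵥ w) := by
  set μ := a + b * (w ⬝ᵥ w) with hμdef
  let v : Fin k → Fin k → ℝ := fun i => hM.eigenvectorBasis i
  have hww : 0 ≤ w ⬝ᵥ w := by
    simpa using dotProduct_star_self_nonneg w
  have hzz : 0 ≤ z ⬝ᵥ z := by
    simpa using dotProduct_star_self_nonneg z
  have hvv : ∀ i, v i ⬝ᵥ v i = 1 := by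
    intro i
    have h := hM.eigenvectorBasis.orthonormal.1 i
    have h2 : inner ℝ (hM.eigenvectorBasis i) (hM.eigenvectorBasis i) = (1 : ℝ) := by
      rw [real_inner_self_eq_norm_sq, h]; norm_num
    rw [EuclideanSpace.inner_eq_star_dotProduct] at h2
    simpa [v] using h2
  have hsum : ∑ i, (v i ⬝ᵥ w) ^ 2 = w ⬝ᵥ w := by
    have h := hM.eigenvectorBasis.sum_sq_norm_inner_right (WithLp.toLp 2 w)
    rw [← real_inner_self_eq_norm_sq, EuclideanSpace.inner_eq_star_dotProduct] at h
    simp only [EuclideanSpace.inner_eq_star_dotProduct, Real.norm_eq_abs, sq_abs] at h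
    simpa [v, dotProduct_comm] using h
  have hMv : ∀ i, hM.eigenvalues i • v i
      = a • v i + (b * (w ⬝ᵥ v i)) • w + (c * (z ⬝ᵥ v i)) • z := by
    intro i
    rw [← hM.mulVec_eigenvectorBasis i]
    change M *ᵥ v i = _
    rw [hMe]
    simp [Matrix.add_mulVec, Matrix.smul_mulVec, Matrix.vecMulVec_mulVec, smul_smul]
  have hdot : ∀ i (p : Fin k → ℝ), hM.eigenvalues i * (p ⬝ᵥ v i)
      = a * (p ⬝ᵥ v i) + b * (w ⬝ᵥ v i) * (p ⬝ᵥ w) + c * (z ⬝ᵥ v i) * (p ⬝ᵥ z) := by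
    intro i p
    have h := congrArg (fun q => p ⬝ᵥ q) (hMv i)
    simpa [dotProduct_add, dotProduct_smul] using h
  have key : ∀ i, min (hM.eigenvalues i) 0 = μ * ((v i ⬝ᵥ w) ^ 2 / (w ⬝ᵥ w)) := by
    intro i
    have hv := hdot i (v i)
    have hw := hdot i w
    have hz := hdot i z
    rw [hvv, dotProduct_comm (v i) w, dotProduct_comm (v i) z] at hv
    rw [hwz] at hw
    rw [dotProduct_comm z w, hwz] at hz
    rw [dotProduct_comm (v i) w]
    set e := hM.eigenvalues i
    set p := w ⬝ᵥ v i
    set q := z ⬝ᵥ v i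
    by_cases hp : p = 0
    · have : 0 ≤ e := by
        rw [hp] at hv
        nlinarith [mul_nonneg hc (mul_self_nonneg q)]
      simp [hp, this]
    · have he : e = μ := by
        apply mul_right_cancel₀ hp
        rw [hw, hμdef]; ring
      rw [he, min_eq_left hμ]
      rcases hμ.eq_or_lt with h0 | hneg
      · simp [h0]
      · have hq : q = 0 := by
          by_contra hq
          have : e = a + c * (z ⬝ᵥ z) := by
            apply mul_right_cancel₀ hq
            rw [hz]; ring
          nlinarith [mul_nonneg hc hzz]
        have hb : b ≠ 0 := by
          rintro rfl
          rw [hμdef] at hneg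
          linarith
        have hpw : p ^ 2 = w ⬝ᵥ w := by
          apply mul_left_cancel₀ hb
          rw [hq, he, hμdef] at hv
          linarith
        have : w ⬝ᵥ w ≠ 0 := by rw [← hpw]; positivity
        rw [hpw, div_self this, mul_one]
  rw [Finset.sum_congr rfl fun i _ => key i, ← Finset.mul_sum, ← Finset.sum_div, hsum]
  by_cases h : w ⬝ᵥ w = 0
  · have : μ = 0 := le_antisymm hμ (by rw [hμdef, h]; linarith)
    simp [this]
  · rw [div_self h, mul_one]

theorem pucciPlus_eq_of_rank_two_perturbation (la La : ℝ) {k : ℕ} {M : Matrix (Fin k) (Fin k) ℝ}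
    (hM : M.IsHermitian) {a b c : ℝ} {w z : Fin k → ℝ}
    (hMe : M = a • 1 + b • Matrix.vecMulVec w w + c • Matrix.vecMulVec z z)
    (hwz : w ⬝ᵥ z = 0) (ha : 0 ≤ a) (hc : 0 ≤ c) (hμ : a + b * (w ⬝ᵥ w) ≤ 0) :
    pucciPlus la La hM
      = -la * (k * a - a + c * (z ⬝ᵥ z)) - La * (a + b * (w ⬝ᵥ w)) := by
  have htr : ∑ i, hM.eigenvalues i = k * a + b * (w ⬝ᵥ w) + c * (z ⬝ᵥ z) := by
    have h := hM.trace_eq_sum_eigenvalues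
    have h2 : M.trace = k * a + b * (w ⬝ᵥ w) + c * (z ⬝ᵥ z) := by
      rw [hMe]
      simp [Matrix.trace_add, Matrix.trace_smul, Matrix.trace_vecMulVec, mul_comm]
    rw [← h2, h]; simp
  have hmin := sum_min_eigenvalues_eq hM hMe hwz ha hc hμ
  have hterm : ∀ i, -La * min (hM.eigenvalues i) 0 - la * max (hM.eigenvalues i) 0
      = (la - La) * min (hM.eigenvalues i) 0 - la * hM.eigenvalues i := by
    intro i
    linear_combination -la * min_add_max (hM.eigenvalues i) 0
  rw [pucciPlus, Finset.sum_congr rfl fun i _ => hterm i, Finset.sum_sub_distrib,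
    ← Finset.mul_sum, ← Finset.mul_sum, hmin, htr]
  ring

/-- The involution of the horizontal indices exchanging `i` and `i + n`. -/
def swapIndex (n : ℕ) : Equiv.Perm (Fin (2 * n)) :=
  Function.Involutive.toPerm
    (fun i => if h : (i : ℕ) < n then ⟨i + n, by omega⟩ else ⟨i - n, by omega⟩)
    (by
      intro i
      have := i.isLt
      ext
      by_cases h : (i : ℕ) < n
      · simp [h]
      · have h' : (i : ℕ) - n < n := by omega
        simp [h, h']
        omega)

/-- The sign with which the coordinate `swapIndex n i` enters the vector field `X_i`. -/
def swapSign (n : ℕ) (i : Fin (2 * n)) : ℝ := if (i : ℕ) < n then 1 else -1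

theorem swapIndex_swapIndex (n : ℕ) (i : Fin (2 * n)) : swapIndex n (swapIndex n i) = i :=
  Function.Involutive.toPerm_involutive _ i

theorem swapSign_mul_self (n : ℕ) (i : Fin (2 * n)) : swapSign n i * swapSign n i = 1 := by
  unfold swapSign; split_ifs <;> norm_num

theorem swapSign_swapIndex (n : ℕ) (i : Fin (2 * n)) :
    swapSign n (swapIndex n i) = -swapSign n i := by
  have := i.isLt
  by_cases h : (i : ℕ) < n
  · simp [swapSign, swapIndex, Function.Involutive.toPerm, h]
  · have h' : (i : ℕ) - n < n := by omega
    simp [swapSign, swapIndex, Function.Involutive.toPerm, h, h']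

/-- The horizontal part of a point. -/
def horiz (n : ℕ) (ξ : Fin (2 * n + 1) → ℝ) (i : Fin (2 * n)) : ℝ := ξ i.castSucc

/-- The symplectic rotation of the horizontal part of a point. -/
def horizRot (n : ℕ) (ξ : Fin (2 * n + 1) → ℝ) (i : Fin (2 * n)) : ℝ :=
  swapSign n i * horiz n ξ (swapIndex n i)

theorem hsq_eq_dotProduct (n : ℕ) (ξ : Fin (2 * n + 1) → ℝ) :
    hsq n ξ = horiz n ξ ⬝ᵥ horiz n ξ :=
  Finset.sum_congr rfl fun _ _ => sq _

theorem horizRot_dotProduct_self (n : ℕ) (ξ : Fin (2 * n + 1) → ℝ) :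
    horizRot n ξ ⬝ᵥ horizRot n ξ = hsq n ξ := by
  rw [hsq_eq_dotProduct]
  unfold dotProduct
  rw [← Equiv.sum_comp (swapIndex n) (fun i => horiz n ξ i * horiz n ξ i)]
  refine Finset.sum_congr rfl fun i _ => ?_
  unfold horizRot
  linear_combination (horiz n ξ (swapIndex n i)) ^ 2 * swapSign_mul_self n i

theorem horiz_dotProduct_horizRot (n : ℕ) (ξ : Fin (2 * n + 1) → ℝ) :
    horiz n ξ ⬝ᵥ horizRot n ξ = 0 := by
  have h : horiz n ξ ⬝ᵥ horizRot n ξ = -(horiz n ξ ⬝ᵥ horizRot n ξ) := by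
    conv_lhs => unfold dotProduct
    rw [← Equiv.sum_comp (swapIndex n), dotProduct, ← Finset.sum_neg_distrib]
    refine Finset.sum_congr rfl fun i _ => ?_
    simp only [horizRot, swapIndex_swapIndex, swapSign_swapIndex]
    ring
  linarith

theorem Xvec_castSucc (n : ℕ) (ξ : Fin (2 * n + 1) → ℝ) (i j : Fin (2 * n)) :
    Xvec n ξ i j.castSucc = if i = j then 1 else 0 := by
  have : (j : ℕ) ≠ 2 * n := j.isLt.ne
  simp [Xvec, this, Fin.ext_iff, eq_comm]

theorem Xvec_last (n : ℕ) (ξ : Fin (2 * n + 1) → ℝ) (i : Fin (2 * n)) :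
    Xvec n ξ i (Fin.last (2 * n)) = 2 * horizRot n ξ i := by
  have : 2 * n ≠ (i : ℕ) := i.isLt.ne'
  by_cases h : (i : ℕ) < n
  · simp [Xvec, this, h, horizRot, horiz, swapSign, swapIndex, Function.Involutive.toPerm]
  · simp [Xvec, this, h, horizRot, horiz, swapSign, swapIndex, Function.Involutive.toPerm]

theorem horizRot_Xvec_antisymm (n : ℕ) (ξ : Fin (2 * n + 1) → ℝ) (i j : Fin (2 * n)) :
    horizRot n (Xvec n ξ i) j = -horizRot n (Xvec n ξ j) i := by
  simp only [horizRot, horiz, Xvec_castSucc]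
  by_cases h : i = swapIndex n j
  · subst h
    simp [swapIndex_swapIndex, swapSign_swapIndex]
  · have h' : j ≠ swapIndex n i := by
      rintro rfl
      exact h (swapIndex_swapIndex n i).symm
    simp [h, h']

section VectorFieldRules

variable {n : ℕ} {f g : (Fin (2 * n + 1) → ℝ) → ℝ} {ξ : Fin (2 * n + 1) → ℝ}

theorem X_add (i : Fin (2 * n)) (hf : DifferentiableAt ℝ f ξ) (hg : DifferentiableAt ℝ g ξ) :
    X n i (fun η => f η + g η) ξ = X n i f ξ + X n i g ξ := by
  simp [X, fderiv_fun_add hf hg]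

theorem X_mul (i : Fin (2 * n)) (hf : DifferentiableAt ℝ f ξ) (hg : DifferentiableAt ℝ g ξ) :
    X n i (fun η => f η * g η) ξ = f ξ * X n i g ξ + g ξ * X n i f ξ := by
  simp [X, fderiv_fun_mul hf hg]

theorem X_comp (i : Fin (2 * n)) {ψ : ℝ → ℝ} {d : ℝ} (hψ : HasDerivAt ψ d (f ξ))
    (hf : DifferentiableAt ℝ f ξ) :
    X n i (fun η => ψ (f η)) ξ = d * X n i f ξ := by
  have h : HasFDerivAt (fun η => ψ (f η)) (d • fderiv ℝ f ξ) ξ :=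
    hψ.comp_hasFDerivAt ξ hf.hasFDerivAt
  simp [X, h.fderiv]

theorem X_congr (i : Fin (2 * n)) (h : f =ᶠ[nhds ξ] g) : X n i f ξ = X n i g ξ := by
  simp [X, h.fderiv_eq]

end VectorFieldRules

theorem X_coord (n : ℕ) (i : Fin (2 * n)) (k : Fin (2 * n + 1)) (ξ : Fin (2 * n + 1) → ℝ) :
    X n i (fun η => η k) ξ = Xvec n ξ i k := by
  have h : HasFDerivAt (fun η : Fin (2 * n + 1) → ℝ => η k)
      (ContinuousLinearMap.proj (R := ℝ) k) ξ := hasFDerivAt_apply k ξ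
  simp [X, h.fderiv]

theorem differentiable_hsq (n : ℕ) : Differentiable ℝ (hsq n) := by
  unfold hsq; fun_prop

theorem differentiable_horizRot (n : ℕ) (j : Fin (2 * n)) :
    Differentiable ℝ (fun η => horizRot n η j) := by
  unfold horizRot horiz; fun_prop

theorem X_horizRot (n : ℕ) (i j : Fin (2 * n)) (ξ : Fin (2 * n + 1) → ℝ) :
    X n i (fun η => horizRot n η j) ξ = horizRot n (Xvec n ξ i) j := by
  unfold horizRot horiz
  rw [X_mul i (by fun_prop) (by fun_prop), X_coord]
  simp [X]

theorem X_hsq (n : ℕ) (i : Fin (2 * n)) (ξ : Fin (2 * n + 1) → ℝ) :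
    X n i (hsq n) ξ = 2 * horiz n ξ i := by
  have h : HasFDerivAt (hsq n) (∑ j : Fin (2 * n),
      (2 * ξ j.castSucc) • (ContinuousLinearMap.proj (R := ℝ) (φ := fun _ => ℝ) j.castSucc)) ξ := by
    refine HasFDerivAt.fun_sum fun j _ => ?_
    have hj : HasFDerivAt (fun η : Fin (2 * n + 1) → ℝ => η j.castSucc)
        (ContinuousLinearMap.proj (R := ℝ) j.castSucc) ξ := hasFDerivAt_apply j.castSucc ξ
    refine (hj.pow 2).congr_fderiv ?_
    simp
  simp [X, h.fderiv, Xvec_castSucc, horiz]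

/-- The fourth power of the homogeneous norm. -/
def quartic (n : ℕ) (ξ : Fin (2 * n + 1) → ℝ) : ℝ :=
  hsq n ξ * hsq n ξ + ξ (Fin.last (2 * n)) * ξ (Fin.last (2 * n))

theorem rho_eq_quartic_rpow (n : ℕ) (ξ : Fin (2 * n + 1) → ℝ) :
    rho n ξ = quartic n ξ ^ (1 / 4 : ℝ) := by
  unfold rho quartic
  rw [← sq, ← sq]
  rfl

theorem differentiable_quartic (n : ℕ) : Differentiable ℝ (quartic n) := by
  have := differentiable_hsq n
  unfold quartic; fun_prop

theorem quartic_pos {n : ℕ} {ξ : Fin (2 * n + 1) → ℝ} (hξ : ξ ≠ 0) : 0 < quartic n ξ := by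
  refine lt_of_le_of_ne (add_nonneg (mul_self_nonneg _) (mul_self_nonneg _)) fun h => hξ ?_
  have hs : hsq n ξ = 0 := by
    unfold quartic at h
    nlinarith [mul_self_nonneg (hsq n ξ), mul_self_nonneg (ξ (Fin.last (2 * n)))]
  have ht : ξ (Fin.last (2 * n)) = 0 := by
    unfold quartic at h
    nlinarith [mul_self_nonneg (hsq n ξ), mul_self_nonneg (ξ (Fin.last (2 * n)))]
  rw [hsq_eq_dotProduct, dotProduct_self_eq_zero] at hs
  funext k
  refine Fin.lastCases ht (fun i => ?_) k
  exact congrFun hs i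

/-- A quarter of the horizontal gradient of `quartic`. -/
def quarticGrad (n : ℕ) (ξ : Fin (2 * n + 1) → ℝ) (j : Fin (2 * n)) : ℝ :=
  hsq n ξ * horiz n ξ j + ξ (Fin.last (2 * n)) * horizRot n ξ j

theorem differentiable_quarticGrad (n : ℕ) (j : Fin (2 * n)) :
    Differentiable ℝ (fun η => quarticGrad n η j) := by
  have := differentiable_hsq n
  have := differentiable_horizRot n j
  unfold quarticGrad horiz; fun_prop

theorem X_quartic (n : ℕ) (j : Fin (2 * n)) (ξ : Fin (2 * n + 1) → ℝ) :
    X n j (quartic n) ξ = 4 * quarticGrad n ξ j := by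
  have hd := differentiable_hsq n
  change X n j (fun η => hsq n η * hsq n η + η (Fin.last (2 * n)) * η (Fin.last (2 * n))) ξ = _
  rw [X_add j (by fun_prop) (by fun_prop), X_mul j (by fun_prop) (by fun_prop),
    X_mul j (by fun_prop) (by fun_prop), X_coord, Xvec_last]
  rw [X_hsq, quarticGrad]
  ring

theorem X_quarticGrad (n : ℕ) (i j : Fin (2 * n)) (ξ : Fin (2 * n + 1) → ℝ) :
    X n i (fun η => quarticGrad n η j) ξ
      = hsq n ξ * (if i = j then 1 else 0) + 2 * horiz n ξ i * horiz n ξ j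
        + ξ (Fin.last (2 * n)) * horizRot n (Xvec n ξ i) j
        + 2 * horizRot n ξ i * horizRot n ξ j := by
  have hd := differentiable_hsq n
  have hd' := differentiable_horizRot n j
  have hX : X n i (fun η => hsq n η) ξ = 2 * horiz n ξ i := X_hsq n i ξ
  unfold quarticGrad horiz
  rw [X_add i (by fun_prop) (by fun_prop), X_mul i (by fun_prop) (by fun_prop),
    X_mul i (by fun_prop) (by fun_prop), X_coord, X_coord, Xvec_last, Xvec_castSucc, X_horizRot,
    hX]
  unfold horiz
  ring

/-- The Heisenberg Hessian of a function of `quartic`. -/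
theorem HessH_comp_quartic (n : ℕ) {ψ ψ' : ℝ → ℝ} {d : ℝ} {ξ : Fin (2 * n + 1) → ℝ} (hξ : ξ ≠ 0)
    (hψ : ∀ u, 0 < u → HasDerivAt ψ (ψ' u) u) (hψ' : HasDerivAt ψ' d (quartic n ξ))
    (i j : Fin (2 * n)) :
    HessH n (fun η => ψ (quartic n η)) ξ i j
      = 16 * d * (quarticGrad n ξ i * quarticGrad n ξ j)
        + 4 * ψ' (quartic n ξ) * (hsq n ξ * (if i = j then 1 else 0)
          + 2 * (horiz n ξ i * horiz n ξ j + horizRot n ξ i * horizRot n ξ j)) := by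
  have hq := differentiable_quartic n
  have hfirst : ∀ j, (fun η => X n j (fun η => ψ (quartic n η)) η)
      =ᶠ[nhds ξ] fun η => ψ' (quartic n η) * (4 * quarticGrad n η j) := by
    intro j
    filter_upwards [isOpen_ne.mem_nhds hξ] with η hη
    rw [X_comp j (hψ _ (quartic_pos hη)) (hq η)]
    exact congrArg _ (X_quartic n j η)
  have hsecond : ∀ i j, X n i (fun η => X n j (fun η => ψ (quartic n η)) η) ξ
      = 16 * d * (quarticGrad n ξ i * quarticGrad n ξ j)
        + 4 * ψ' (quartic n ξ) * X n i (fun η => quarticGrad n η j) ξ := by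
    intro i j
    have hg := differentiable_quarticGrad n j
    have hcomp : DifferentiableAt ℝ (fun η => ψ' (quartic n η)) ξ :=
      hψ'.differentiableAt.comp ξ (hq ξ)
    have hconst : X n i (fun _ => (4 : ℝ)) ξ = 0 := by simp [X]
    rw [X_congr i (hfirst j), X_mul i hcomp (by fun_prop), X_comp i hψ' (hq ξ),
      X_mul i (by fun_prop) (by fun_prop), X_quartic, hconst]
    ring
  simp only [HessH, Matrix.of_apply, hsecond, X_quarticGrad]
  rw [horizRot_Xvec_antisymm n ξ j i]
  simp only [eq_comm (a := j) (b := i)]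
  ring

/-- The vector orthogonal to `quarticGrad` in the plane of `horiz` and `horizRot`. -/
def quarticGradRot (n : ℕ) (ξ : Fin (2 * n + 1) → ℝ) (j : Fin (2 * n)) : ℝ :=
  hsq n ξ * horizRot n ξ j - ξ (Fin.last (2 * n)) * horiz n ξ j

theorem quarticGrad_eq (n : ℕ) (ξ : Fin (2 * n + 1) → ℝ) :
    quarticGrad n ξ = hsq n ξ • horiz n ξ + ξ (Fin.last (2 * n)) • horizRot n ξ := rfl

theorem quarticGradRot_eq (n : ℕ) (ξ : Fin (2 * n + 1) → ℝ) :
    quarticGradRot n ξ = hsq n ξ • horizRot n ξ - ξ (Fin.last (2 * n)) • horiz n ξ := rfl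

theorem quarticGrad_dotProduct_self (n : ℕ) (ξ : Fin (2 * n + 1) → ℝ) :
    quarticGrad n ξ ⬝ᵥ quarticGrad n ξ = hsq n ξ * quartic n ξ := by
  simp only [quarticGrad_eq, add_dotProduct, dotProduct_add, smul_dotProduct, dotProduct_smul,
    smul_eq_mul, horizRot_dotProduct_self, dotProduct_comm (horizRot n ξ) (horiz n ξ),
    horiz_dotProduct_horizRot, ← hsq_eq_dotProduct, quartic]
  ring

theorem quarticGradRot_dotProduct_self (n : ℕ) (ξ : Fin (2 * n + 1) → ℝ) :
    quarticGradRot n ξ ⬝ᵥ quarticGradRot n ξ = hsq n ξ * quartic n ξ := by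
  simp only [quarticGradRot_eq, sub_dotProduct, dotProduct_sub, smul_dotProduct, dotProduct_smul,
    smul_eq_mul, horizRot_dotProduct_self, dotProduct_comm (horizRot n ξ) (horiz n ξ),
    horiz_dotProduct_horizRot, ← hsq_eq_dotProduct, quartic]
  ring

theorem quarticGrad_dotProduct_quarticGradRot (n : ℕ) (ξ : Fin (2 * n + 1) → ℝ) :
    quarticGrad n ξ ⬝ᵥ quarticGradRot n ξ = 0 := by
  simp only [quarticGrad_eq, quarticGradRot_eq, add_dotProduct, dotProduct_sub, smul_dotProduct,
    dotProduct_smul, smul_eq_mul, horizRot_dotProduct_self,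
    dotProduct_comm (horizRot n ξ) (horiz n ξ), horiz_dotProduct_horizRot, ← hsq_eq_dotProduct]
  ring

theorem HessH_comp_quartic_eq_rank_two_perturbation (n : ℕ) {ψ ψ' : ℝ → ℝ} {d : ℝ}
    {ξ : Fin (2 * n + 1) → ℝ} (hξ : ξ ≠ 0)
    (hψ : ∀ u, 0 < u → HasDerivAt ψ (ψ' u) u) (hψ' : HasDerivAt ψ' d (quartic n ξ)) :
    HessH n (fun η => ψ (quartic n η)) ξ
      = (4 * ψ' (quartic n ξ) * hsq n ξ) • 1
        + (16 * d + 8 * ψ' (quartic n ξ) / quartic n ξ)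
          • Matrix.vecMulVec (quarticGrad n ξ) (quarticGrad n ξ)
        + (8 * ψ' (quartic n ξ) / quartic n ξ)
          • Matrix.vecMulVec (quarticGradRot n ξ) (quarticGradRot n ξ) := by
  ext i j
  have hne := (quartic_pos hξ).ne'
  rw [HessH_comp_quartic n hξ hψ hψ']
  simp only [Matrix.add_apply, Matrix.smul_apply, Matrix.one_apply, Matrix.vecMulVec_apply,
    smul_eq_mul]
  have hsum : quarticGrad n ξ i * quarticGrad n ξ j + quarticGradRot n ξ i * quarticGradRot n ξ j
      = quartic n ξ * (horiz n ξ i * horiz n ξ j + horizRot n ξ i * horizRot n ξ j) := by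
    unfold quarticGrad quarticGradRot quartic; ring
  have hsplit : horiz n ξ i * horiz n ξ j + horizRot n ξ i * horizRot n ξ j
      = (quarticGrad n ξ i * quarticGrad n ξ j + quarticGradRot n ξ i * quarticGradRot n ξ j)
        / quartic n ξ := by
    rw [hsum]; field_simp
  rw [hsplit]
  ring

theorem hasDerivAt_radial_profile {α C₁ C₂ : ℝ} (hC : 0 ≤ C₁) {φ : ℝ → ℝ}
    (hφ : φ = fun r =>
      if α < 2 then C₁ * r ^ (2 - α) + C₂
      else if α = 2 then C₁ * Real.log r + C₂
      else -C₁ * r ^ (2 - α) + C₂) :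
    ∃ c : ℝ, 0 ≤ c ∧ ∀ r, 0 < r → HasDerivAt φ (c * r ^ (1 - α)) r := by
  have hpow : ∀ C r : ℝ, 0 < r →
      HasDerivAt (fun r : ℝ => C * r ^ (2 - α) + C₂) (C * (2 - α) * r ^ (1 - α)) r := by
    intro C r hr
    have h := ((Real.hasDerivAt_rpow_const (p := 2 - α) (Or.inl hr.ne')).const_mul C).add_const C₂
    refine h.congr_deriv ?_
    rw [show 2 - α - 1 = 1 - α by ring]
    ring
  rcases lt_trichotomy α 2 with h | h | h
  · refine ⟨C₁ * (2 - α), mul_nonneg hC (by linarith), fun r hr => ?_⟩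
    simpa [hφ, h] using hpow C₁ r hr
  · refine ⟨C₁, hC, fun r hr => ?_⟩
    have h1 := ((Real.hasDerivAt_log hr.ne').const_mul C₁).add_const C₂
    rw [hφ, h]
    simp only [lt_irrefl, if_false, if_true]
    refine h1.congr_deriv ?_
    rw [show (1 - 2 : ℝ) = -1 by norm_num, Real.rpow_neg_one]
  · refine ⟨-C₁ * (2 - α), by nlinarith, fun r hr => ?_⟩
    have h1 : ¬ α < 2 := by linarith
    rw [hφ]
    simp only [h1, h.ne', if_false]
    exact hpow (-C₁) r hr

theorem concaveOn_and_monotoneOn_of_hasDerivAt_rpow {φ : ℝ → ℝ} {c p : ℝ} (hc : 0 ≤ c)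
    (hp : p ≤ 0) (hφ : ∀ r, 0 < r → HasDerivAt φ (c * r ^ p) r) :
    ConcaveOn ℝ (Set.Ioi 0) φ ∧ MonotoneOn φ (Set.Ioi 0) := by
  have hcont : ContinuousOn φ (Set.Ioi 0) :=
    fun r hr => (hφ r hr).continuousAt.continuousWithinAt
  have hdiff : DifferentiableOn ℝ φ (interior (Set.Ioi 0)) := by
    rw [interior_Ioi]
    exact fun r hr => (hφ r hr).differentiableAt.differentiableWithinAt
  constructor
  · refine AntitoneOn.concaveOn_of_deriv (convex_Ioi 0) hcont hdiff ?_
    rw [interior_Ioi]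
    intro r hr s hs hrs
    rw [(hφ r hr).deriv, (hφ s hs).deriv]
    exact mul_le_mul_of_nonneg_left (Real.rpow_le_rpow_of_nonpos hr hrs hp) hc
  · refine monotoneOn_of_deriv_nonneg (convex_Ioi 0) hcont hdiff ?_
    rw [interior_Ioi]
    intro r hr
    rw [(hφ r hr).deriv]
    exact mul_nonneg hc (Real.rpow_nonneg (le_of_lt hr) _)

/-- The derivative of a power-type profile in the variable `u = r ^ 4`. -/
theorem hasDerivAt_comp_rpow_quarter {φ : ℝ → ℝ} {c α : ℝ}
    (hφ : ∀ r, 0 < r → HasDerivAt φ (c * r ^ (1 - α)) r) {u : ℝ} (hu : 0 < u) :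
    HasDerivAt (fun u : ℝ => φ (u ^ (1 / 4 : ℝ))) (c / 4 * u ^ (-(α + 2) / 4)) u := by
  have h := (hφ _ (Real.rpow_pos_of_pos hu (1 / 4))).comp u
    (Real.hasDerivAt_rpow_const (p := 1 / 4) (Or.inl hu.ne'))
  refine h.congr_deriv ?_
  rw [← Real.rpow_mul hu.le]
  have : u ^ (-(α + 2) / 4) = u ^ (1 / 4 * (1 - α)) * u ^ ((1 : ℝ) / 4 - 1) := by
    rw [← Real.rpow_add hu]
    congr 1
    ring
  rw [this]
  ring

/-- with `α = (λ/Λ)(Q-1)+1`, `Q = 2n+2`, the radial function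
`Φ₁ = φ₁ ∘ ρ`, with `φ₁(r) = C₁ r^{2-α}+C₂` (`α<2`), `C₁ log r + C₂` (`α=2`)
or `-C₁ r^{2-α}+C₂` (`α>2`), `C₁ ≥ 0`, satisfies `𝓜⁺_{λ,Λ}(D²Φ₁)=0` classically
in `ℝ^{2n+1} \ {0}`, and `φ₁` is concave and increasing on `(0,∞)`. -/
theorem fundamental_solution_pucci_plus_concave (n : ℕ) (hn : 1 ≤ n)
    (la La C₁ C₂ : ℝ) (h0 : 0 < la) (hle : la ≤ La) (hC : 0 ≤ C₁)
    (α : ℝ) (hα : α = la / La * (2*n + 1) + 1)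
    (φ : ℝ → ℝ)
    (hφ : φ = fun r =>
      if α < 2 then C₁ * r ^ (2 - α) + C₂
      else if α = 2 then C₁ * Real.log r + C₂
      else -C₁ * r ^ (2 - α) + C₂)
    (hM : ∀ ξ : Fin (2*n+1) → ℝ,
      (HessH n (fun η => φ (rho n η)) ξ).IsHermitian) :
    (∀ ξ : Fin (2*n+1) → ℝ, ξ ≠ 0 → pucciPlus la La (hM ξ) = 0) ∧
    ConcaveOn ℝ (Set.Ioi 0) φ ∧ MonotoneOn φ (Set.Ioi 0) := by
  have hLa : 0 < La := h0.trans_le hle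
  have hα1 : 0 ≤ α - 1 := by
    rw [hα]
    have : 0 ≤ la / La * (2 * n + 1) := by positivity
    linarith
  obtain ⟨c, hc, hderiv⟩ := hasDerivAt_radial_profile hC hφ
  refine ⟨fun ξ hξ => ?_,
    concaveOn_and_monotoneOn_of_hasDerivAt_rpow hc (by linarith) hderiv⟩
  have hu := quartic_pos hξ
  have hrho : (fun η => φ (rho n η)) = fun η => φ (quartic n η ^ (1 / 4 : ℝ)) := by
    funext η
    rw [rho_eq_quartic_rpow]
  have hsecond : HasDerivAt (fun u : ℝ => c / 4 * u ^ (-(α + 2) / 4))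
      (c / 4 * (-(α + 2) / 4 * quartic n ξ ^ (-(α + 2) / 4 - 1))) (quartic n ξ) :=
    (Real.hasDerivAt_rpow_const (Or.inl hu.ne')).const_mul _
  have hMe := HessH_comp_quartic_eq_rank_two_perturbation n hξ
    (ψ := fun u : ℝ => φ (u ^ (1 / 4 : ℝ))) (ψ' := fun u : ℝ => c / 4 * u ^ (-(α + 2) / 4))
    (fun u hu => hasDerivAt_comp_rpow_quarter hderiv hu) hsecond
  rw [← hrho, Real.rpow_sub_one hu.ne'] at hMe
  have hh : 0 ≤ hsq n ξ := Finset.sum_nonneg fun _ _ => sq_nonneg _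
  have hP : 0 ≤ quartic n ξ ^ (-(α + 2) / 4) := Real.rpow_nonneg hu.le _
  have hww := quarticGrad_dotProduct_self n ξ
  have hzz := quarticGradRot_dotProduct_self n ξ
  set P := quartic n ξ ^ (-(α + 2) / 4)
  set u := quartic n ξ
  have hμ : 4 * (c / 4 * P) * hsq n ξ
      + (16 * (c / 4 * (-(α + 2) / 4 * (P / u))) + 8 * (c / 4 * P) / u)
        * (quarticGrad n ξ ⬝ᵥ quarticGrad n ξ) = -(α - 1) * (c * P * hsq n ξ) := by
    rw [hww]
    field_simp
    ring
  have hμ0 : -(α - 1) * (c * P * hsq n ξ) ≤ 0 := by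
    have : 0 ≤ (α - 1) * (c * P * hsq n ξ) := by positivity
    linarith
  rw [pucciPlus_eq_of_rank_two_perturbation la La (hM ξ) hMe
    (quarticGrad_dotProduct_quarticGradRot n ξ) (by positivity) (by positivity) (hμ ▸ hμ0),
    hμ, hzz, hα]
  push_cast
  field_simp
  ring
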